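/- Let t ≥ 1 and let a_1, …, a_t be positive integers such that the numbers 2^{a_1}+1, …, 2^{a_t}+1 are pairwise coprime. Then for every rational number x with odd denominator, ∑_{i_1=1}^{2^{a_1}} ∑_{i_2=1}^{2^{a_2}} ⋯ ∑_{i_t=1}^{2^{a_t}} V(x + ∑_{j=1}^t i_j/(2^{a_j}+1)) = 2^{a_1 + ⋯ + a_t − 1} + V(2; a_1, …, a_t; x). -/

import Mathlib

/-- `IsV2 V` says that `V : ℚ → ℚ` is the Kubert `V`-function in characteristic 2:
for any rational `x` (with odd denominator), any `k ≥ 1` and any integer `a` with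
`0 ≤ a < 2^k - 1` such that `x - a/(2^k - 1)` is an integer, `V x` equals the
binary digit sum of `a` divided by `k`. -/
def IsV2 (V : ℚ → ℚ) : Prop :=
  ∀ (x : ℚ) (k a : ℕ), 0 < k → a < 2 ^ k - 1 →
    (∃ z : ℤ, x - (a : ℚ) / ((2 : ℚ) ^ k - 1) = (z : ℚ)) →
    V x = ((Nat.digits 2 a).sum : ℚ) / (k : ℚ)

/-- `Vmulti V r x = V(2; r₁, …, r_t; x) = ∑_{S ⊆ {1,…,t}} (-1)^{t - |S|} V((∏_{j ∈ S} (2^{r_j}+1)) x)`. -/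
def Vmulti (V : ℚ → ℚ) {t : ℕ} (r : Fin t → ℕ) (x : ℚ) : ℚ :=
  ∑ S : Finset (Fin t), (-1 : ℚ) ^ (t - S.card) * V ((∏ j ∈ S, ((2 : ℚ) ^ (r j) + 1)) * x)

/-! The periodic sawtooth `B(x) = {x} - 1/2` satisfies the distribution relations
`∑ B(x + i/N) = B(N x)`, `0 ≤ i < N`. On the multiples of `1/(2^k - 1)`, which for a suitable `k`
include all the points of the theorem, `V - 1/2` is the mean of `B(2^l x)` over `0 ≤ l < k`, so it
inherits these relations for odd `N`. Let the group algebra `ℤ[ℚ]` act by translations, and put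
`τ_N = ∑ [i/N]`, `0 ≤ i < N`. The multiple sum is the action of
`∏ (τ_{N_j} - 1) = ∑_S (-1)^(t - |S|) ∏_{j ∈ S} τ_{N_j}`, and, the `N_j` being coprime,
`∏_{j ∈ S} τ_{N_j}` turns `V - 1/2` into `V - 1/2` composed with multiplication by
`∏_{j ∈ S} N_j`. -/

open Finset Function
open scoped AddMonoidAlgebra
open AddMonoidAlgebra (single)

/-- The action of the monoid algebra `ℤ[G]` on functions on `G`, in which the basis element of
`y : G` sends `f` to `fun x ↦ f (x + y)`. -/
noncomputable def translationAction (G A : Type*) [AddCommMonoid G] [AddCommGroup A] :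
    ℤ[G] →ₐ[ℤ] Module.End ℤ (G → A) :=
  AddMonoidAlgebra.lift ℤ _ _
    { toFun := fun y ↦ LinearMap.funLeft ℤ A (· + y.toAdd)
      map_one' := by ext; simp [LinearMap.funLeft]
      map_mul' := fun y z ↦ by ext; simp [LinearMap.funLeft, add_assoc, add_comm y.toAdd] }

lemma translationAction_single_one {G A : Type*} [AddCommMonoid G] [AddCommGroup A] (y : G)
    (f : G → A) (x : G) : translationAction G A (single y 1) f x = f (x + y) := by
  simp [translationAction, LinearMap.funLeft]

section Distribution

variable {K A : Type*} [Field K] [AddCommGroup A] {f : K → A} {M N : ℕ}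

/-- The distribution relation of level `N` for `f`: summing `f` over the `N` points `y`
modulo `1` with `N * y ≡ N * x` modulo `1` gives `f (N * x)`. -/
def DistributionRelation (N : ℕ) (f : K → A) : Prop :=
  ∀ x, ∑ i ∈ range N, f (x + i / N) = f (N * x)

/-- The element `∑ [i / N]`, `0 ≤ i < N`, of the group algebra `ℤ[K]`, which acts on
functions as the left side of the distribution relation of level `N`. -/
noncomputable def distributionElement (K : Type*) [Field K] (N : ℕ) : ℤ[K] :=
  ∑ i ∈ range N, single (i / N : K) 1

lemma translationAction_distributionElement (N : ℕ) (f : K → A) (x : K) :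
    translationAction K A (distributionElement K N) f x = ∑ i ∈ range N, f (x + i / N) := by
  simp [distributionElement, translationAction_single_one]

lemma distributionElement_succ_sub_one (n : ℕ) :
    distributionElement K (n + 1) - 1 =
      ∑ i : Fin n, single (((i : ℕ) + 1) / ((n : K) + 1) : K) (1 : ℤ) := by
  rw [distributionElement, sum_range_succ', Fin.sum_univ_eq_sum_range
    (fun i ↦ single (((i : ℕ) + 1) / ((n : K) + 1) : K) (1 : ℤ)) n]
  simp [AddMonoidAlgebra.one_def]

variable [CharZero K]

lemma periodic_sum_range_add_div (hf : Function.Periodic f 1) (hN : N ≠ 0) :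
    Function.Periodic (fun x ↦ ∑ i ∈ range N, f (x + i / N)) (1 / N) := fun x ↦ by
  have hlast : f (x + N / N) = f (x + (0 : ℕ) / N) := by
    rw [div_self (mod_cast hN), hf]; simp
  have hshift : ∀ i : ℕ, x + 1 / N + i / N = x + (i + 1 : ℕ) / N := fun i ↦ by
    push_cast; ring
  simp only [hshift]
  exact add_right_cancel ((sum_range_succ' (fun i ↦ f (x + i / N)) N).symm.trans
    ((sum_range_succ _ N).trans (by rw [hlast])))

lemma sum_range_coprime_mul_div (hf : Function.Periodic f 1) (hMN : M.Coprime N) (x : K) :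
    ∑ i ∈ range N, f (x + M * (i / N)) = ∑ i ∈ range N, f (x + i / N) := by
  rcases N.eq_zero_or_pos with rfl | hN
  · simp
  have hmaps : Set.MapsTo (fun i ↦ M * i % N) (range N) (range N) := fun i _ ↦ by
    simpa using Nat.mod_lt _ hN
  have hinj : Set.InjOn (fun i ↦ M * i % N) (range N) := fun i hi j hj hij ↦
    (Nat.ModEq.cancel_left_of_coprime hMN.symm hij).eq_of_lt_of_lt (by simpa using hi)
      (by simpa using hj)
  refine sum_nbij _ hmaps hinj (surjOn_of_injOn_of_card_le _ hmaps hinj le_rfl) fun i _ ↦ ?_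
  have hN0 : (N : K) ≠ 0 := mod_cast hN.ne'
  have hdiv : (M * i : K) = (M * i % N : ℕ) + N * (M * i / N : ℕ) := mod_cast
    (Nat.mod_add_div (M * i) N).symm
  have hsplit : x + M * (i / N) = x + (M * i % N : ℕ) / N + (M * i / N : ℕ) * 1 := by
    rw [← mul_div_assoc, hdiv]
    field_simp
    ring
  rw [hsplit, hf.nat_mul]

lemma DistributionRelation.comp_natCast_mul (h : DistributionRelation N f)
    (hf : Function.Periodic f 1) (hMN : M.Coprime N) :
    DistributionRelation N fun x ↦ f (M * x) := fun x ↦ by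
  simp only [mul_add, sum_range_coprime_mul_div hf hMN, h (M * x), mul_left_comm]

variable {ι : Type*}

lemma translationAction_prod_distributionElement (hf : Function.Periodic f 1) (N : ι → ℕ)
    (hcop : Pairwise (Nat.Coprime on N)) (hdist : ∀ j, DistributionRelation (N j) f)
    (S : Finset ι) (x : K) :
    translationAction K A (∏ j ∈ S, distributionElement K (N j)) f x =
      f ((∏ j ∈ S, (N j : K)) * x) := by
  classical
  induction S using Finset.induction generalizing x with
  | empty => simp
  | insert j S hj ih =>
    have hprod : (∏ k ∈ S, N k).Coprime (N j) :=
      Nat.Coprime.prod_left fun k hk ↦ hcop (ne_of_mem_of_not_mem hk hj)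
    have hS := (hdist j).comp_natCast_mul hf hprod x
    push_cast at hS
    rw [prod_insert hj, map_mul, Module.End.mul_apply, translationAction_distributionElement,
      sum_congr rfl fun i _ ↦ ih _, hS, prod_insert hj, mul_left_comm, mul_assoc]

theorem sum_translates_eq_sum_finset [Fintype ι] [DecidableEq ι]
    (hf : Function.Periodic f 1) (n : ι → ℕ)
    (hcop : Pairwise (Nat.Coprime on fun j ↦ n j + 1))
    (hdist : ∀ j, DistributionRelation (n j + 1) f) (x : K) :
    ∑ i : (∀ j, Fin (n j)), f (x + ∑ j, ((i j : ℕ) + 1) / ((n j : K) + 1)) =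
      ∑ S : Finset ι, (-1 : ℤ) ^ (Fintype.card ι - #S) • f ((∏ j ∈ S, ((n j : K) + 1)) * x) := by
  have hleft : ∏ j, (distributionElement K (n j + 1) - 1) = ∑ i : (∀ j, Fin (n j)),
      single (∑ j, ((i j : ℕ) + 1) / ((n j : K) + 1)) (1 : ℤ) := by
    simp [distributionElement_succ_sub_one, Fintype.prod_sum, AddMonoidAlgebra.prod_single]
  have hright : ∏ j, (distributionElement K (n j + 1) - 1) = ∑ S : Finset ι,
      (-1 : ℤ) ^ (Fintype.card ι - #S) • ∏ j ∈ S, distributionElement K (n j + 1) := by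
    simp [sub_eq_add_neg, Fintype.prod_add, card_compl, mul_comm]
  have h := congrArg (translationAction K A · f x) (hleft.symm.trans hright)
  simpa only [map_sum, map_zsmul, LinearMap.sum_apply, LinearMap.smul_apply, Finset.sum_apply,
    Pi.smul_apply, translationAction_single_one,
    translationAction_prod_distributionElement hf _ hcop hdist,
    Nat.cast_add, Nat.cast_one] using h

end Distribution

section Sawtooth

variable {K : Type*} [Field K] [LinearOrder K] [IsStrictOrderedRing K] [FloorRing K]

/-- The sawtooth function, i.e. the periodic first Bernoulli polynomial. -/
def sawtooth (x : K) : K := Int.fract x - 1 / 2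

lemma sawtooth_periodic : Function.Periodic (sawtooth : K → K) 1 := fun x ↦ by
  simp [sawtooth]

lemma distributionRelation_sawtooth {N : ℕ} (hN : N ≠ 0) :
    DistributionRelation N (sawtooth : K → K) := fun x ↦ by
  have hN0 : (0 : K) < N := by positivity
  set r := Int.fract (N * x) with hr
  have hx : x = r / N + ⌊N * x⌋ * (1 / N) := by
    field_simp
    rw [hr, mul_comm x, Int.fract_add_floor]
  have hfract : ∀ i ∈ range N, sawtooth (r / N + i / N) = (r + i) / N - 1 / 2 := fun i hi ↦ by
    have hi' : (i : K) + 1 ≤ N := mod_cast mem_range.1 hi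
    have hr0 : 0 ≤ r := Int.fract_nonneg _
    have hr1 : r < 1 := Int.fract_lt_one _
    rw [sawtooth, ← add_div,
      Int.fract_eq_self.2 ⟨div_nonneg (add_nonneg hr0 i.cast_nonneg) hN0.le,
        (div_lt_one hN0).2 (by linarith)⟩]
  have hgauss : (∑ i ∈ range N, (i : K)) * 2 = N * (N - 1) := by
    have := congrArg (Nat.cast : ℕ → K) (sum_range_id_mul_two N)
    rwa [Nat.cast_mul, Nat.cast_sum, Nat.cast_mul, Nat.cast_pred (by omega)] at this
  calc ∑ i ∈ range N, sawtooth (x + i / N)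
      = ∑ i ∈ range N, sawtooth (r / N + i / N) := by
        have hper := periodic_sum_range_add_div (sawtooth_periodic (K := K)) hN
        conv_lhs => rw [hx]
        exact hper.int_mul _ _
    _ = ∑ i ∈ range N, ((r + i) / N - 1 / 2) := sum_congr rfl hfract
    _ = r - 1 / 2 := by
        simp only [sum_sub_distrib, ← sum_div, sum_add_distrib, sum_const, card_range,
          nsmul_eq_mul]
        field_simp
        linear_combination hgauss

end Sawtooth

section Digits

variable {b k a : ℕ}

lemma sub_one_mul_sum_div_pow_add_sum_digits (ha : a < b ^ k) :
    (b - 1) * ∑ i ∈ range k, a / b ^ (i + 1) + (b.digits a).sum = a := by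
  rcases eq_or_ne a 0 with rfl | ha0
  · simp
  have hlog : ∑ i ∈ range (b.log a + 1), a / b ^ (i + 1) = ∑ i ∈ range k, a / b ^ (i + 1) := by
    refine sum_subset (range_subset_range.2 (Nat.log_lt_of_lt_pow ha0 ha)) fun i _ hi ↦ ?_
    rcases Nat.lt_or_ge 1 b with hb | hb
    · exact Nat.div_eq_of_lt (Nat.lt_pow_of_log_lt hb (by simp at hi; omega))
    · interval_cases b <;> simp_all
  rw [← hlog, Nat.sub_one_mul_sum_log_div_pow_eq_sub_sum_digits,
    Nat.sub_add_cancel (Nat.digit_sum_le b a)]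

/-- Dividing by `b ^ k - 1` repeats the `k` digits of `a` periodically after the point, so
multiplication by `b ^ i` brings the leading `i` of them in front of it. -/
lemma pow_mul_div_pow_sub_one (ha : a < b ^ k - 1) {i : ℕ} (hi : i ≤ k) :
    b ^ i * a / (b ^ k - 1) = a / b ^ (k - i) := by
  have hk : b ^ i * b ^ (k - i) = b ^ k := pow_mul_pow_sub b hi
  rw [← hk] at ha ⊢
  have ha' : a + 1 < b ^ i * b ^ (k - i) := by omega
  clear ha hk
  generalize b ^ i = P, b ^ (k - i) = Q at *
  have hQ : 0 < Q := pos_of_mul_pos_right (a.succ.zero_le.trans_lt ha') P.zero_le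
  have hdecomp := Nat.div_add_mod a Q
  have hr := Nat.mod_lt a hQ
  have hq : a / Q < P := (Nat.div_lt_iff_lt_mul hQ).2 (by omega)
  generalize a / Q = q, a % Q = r at *
  have hrem : P * r + q + 1 < P * Q := by
    rcases Nat.lt_or_ge (q + 1) P with hlt | hge
    · nlinarith
    · obtain rfl : P = q + 1 := by omega
      have : r + 1 < Q := by
        by_contra! h
        nlinarith
      nlinarith
  refine Nat.div_eq_of_lt_le ?_ ?_ <;> zify [show 1 ≤ P * Q by omega] <;> nlinarith

lemma sub_one_mul_sum_fract (ha : a < b ^ k - 1) :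
    ((b : ℚ) - 1) * ∑ i ∈ range k, Int.fract ((b : ℚ) ^ i * (a / (b ^ k - 1 : ℕ))) =
      (b.digits a).sum := by
  have hb : 1 ≤ b := by
    rcases b.eq_zero_or_pos with rfl | hb
    · rcases k with _ | k <;> simp at ha
    · exact hb
  have hm : ((b ^ k - 1 : ℕ) : ℚ) ≠ 0 := mod_cast (a.zero_le.trans_lt ha).ne'
  have hfract : ∀ i ∈ range k, Int.fract ((b : ℚ) ^ i * (a / (b ^ k - 1 : ℕ))) =
      b ^ i * (a / (b ^ k - 1 : ℕ)) - (a / b ^ (k - 1 - i + 1) : ℕ) := fun i hi ↦ by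
    have hi := mem_range.1 hi
    rw [← mul_div_assoc, Int.fract, show k - 1 - i + 1 = k - i by omega,
      ← pow_mul_div_pow_sub_one ha hi.le]
    have hfloor : ⌊((b ^ i * a : ℕ) / (b ^ k - 1 : ℕ) : ℚ)⌋ = (b ^ i * a / (b ^ k - 1) : ℕ) := by
      rw [Rat.floor_natCast_div_natCast, Int.natCast_div]
    rw [Nat.cast_mul, Nat.cast_pow] at hfloor
    rw [hfloor, Int.cast_natCast]
  have hdigits : ((b : ℚ) - 1) * ∑ i ∈ range k, ((a / b ^ (i + 1) : ℕ) : ℚ) +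
      (b.digits a).sum = a := by
    have := sub_one_mul_sum_div_pow_add_sum_digits (show a < b ^ k by omega)
    rw [← Nat.cast_pred hb]
    exact_mod_cast this
  have hgeom : ((b : ℚ) - 1) * ∑ i ∈ range k, (b : ℚ) ^ i = (b ^ k - 1 : ℕ) := by
    rw [mul_geom_sum, Nat.cast_pred (by positivity)]
    simp
  rw [sum_congr rfl hfract, sum_sub_distrib, ← sum_mul, mul_sub, ← mul_assoc, hgeom,
    mul_div_cancel₀ _ hm, sum_range_reflect (fun i ↦ ((a / b ^ (i + 1) : ℕ) : ℚ)) k]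
  linarith

end Digits

/-- The mean of the sawtooth function over the first `k` points of the orbit of `x` under
doubling. It agrees with `V - 1 / 2` on the multiples of `1 / (2 ^ k - 1)` but, unlike `V`, it is
determined on all of `ℚ`, so its distribution relations need no restriction on denominators. -/
def meanSawtooth (k : ℕ) (x : ℚ) : ℚ := (∑ i ∈ range k, sawtooth (2 ^ i * x)) / k

lemma meanSawtooth_periodic (k : ℕ) : Function.Periodic (meanSawtooth k) 1 := fun x ↦ by
  have h (i : ℕ) : sawtooth (2 ^ i * (x + 1)) = sawtooth (2 ^ i * x) := by
    simpa [mul_add] using sawtooth_periodic.nat_mul (2 ^ i) (2 ^ i * x)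
  simp only [meanSawtooth, h]

lemma distributionRelation_meanSawtooth (k : ℕ) {N : ℕ} (hN : Odd N) :
    DistributionRelation N (meanSawtooth k) := fun x ↦ by
  have h (i : ℕ) : DistributionRelation N fun y : ℚ ↦ sawtooth (2 ^ i * y) := by
    simpa using (distributionRelation_sawtooth (K := ℚ) hN.pos.ne').comp_natCast_mul
      sawtooth_periodic (hN.coprime_two_left.pow_left i)
  simp only [meanSawtooth, ← sum_div]
  rw [sum_comm, sum_congr rfl fun i _ ↦ h i x]

lemma natCast_inv_mem_zmultiples_inv {d m : ℕ} (hm : m ≠ 0) (h : d ∣ m) :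
    (d : ℚ)⁻¹ ∈ AddSubgroup.zmultiples (m : ℚ)⁻¹ := by
  obtain ⟨c, rfl⟩ := h
  obtain ⟨hd, hc⟩ := mul_ne_zero_iff.1 hm
  exact ⟨c, by simp; field_simp⟩

lemma mem_zmultiples_inv_of_den_dvd {q : ℚ} {m : ℕ} (hm : m ≠ 0) (h : q.den ∣ m) :
    q ∈ AddSubgroup.zmultiples (m : ℚ)⁻¹ := by
  have := zsmul_mem (natCast_inv_mem_zmultiples_inv hm h) q.num
  rwa [zsmul_eq_mul, ← div_eq_mul_inv, Rat.num_div_den] at this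

lemma exists_eq_div_add_intCast_of_mem_zmultiples_inv {m : ℕ} (hm : m ≠ 0) {q : ℚ}
    (hq : q ∈ AddSubgroup.zmultiples (m : ℚ)⁻¹) : ∃ a < m, ∃ z : ℤ, q = a / m + z := by
  obtain ⟨c, rfl⟩ := AddSubgroup.mem_zmultiples_iff.1 hq
  obtain ⟨a, ha⟩ := Int.eq_ofNat_of_zero_le (Int.emod_nonneg c (b := m) (by omega))
  have ham : (a : ℤ) < m := ha ▸ Int.emod_lt_of_pos c (by omega)
  have hc : (c : ℚ) = a + m * (c / m : ℤ) := by
    exact_mod_cast ha ▸ (Int.emod_add_mul_ediv c m).symm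
  refine ⟨a, by omega, c / m, ?_⟩
  rw [zsmul_eq_mul, hc]
  field_simp

lemma meanSawtooth_natCast_div {k a : ℕ} (hk : 0 < k) (ha : a < 2 ^ k - 1) :
    meanSawtooth k (a / (2 ^ k - 1 : ℕ)) = (Nat.digits 2 a).sum / k - 1 / 2 := by
  have hk0 : (k : ℚ) ≠ 0 := by positivity
  have hsum : ∑ i ∈ range k, Int.fract ((2 : ℚ) ^ i * (a / (2 ^ k - 1 : ℕ))) =
      (Nat.digits 2 a).sum := by
    rw [← sub_one_mul_sum_fract ha, Nat.cast_ofNat]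
    ring
  simp only [meanSawtooth, sawtooth, sum_sub_distrib, sum_const, card_range, nsmul_eq_mul, hsum]
  rw [sub_div, mul_div_cancel_left₀ _ hk0]

lemma IsV2.sub_half_eq_meanSawtooth {V : ℚ → ℚ} (hV : IsV2 V) {k : ℕ} (hk : 0 < k) {x : ℚ}
    (hx : x ∈ AddSubgroup.zmultiples ((2 ^ k - 1 : ℕ) : ℚ)⁻¹) :
    V x - 1 / 2 = meanSawtooth k x := by
  have hm : 2 ^ k - 1 ≠ 0 := (Nat.sub_pos_of_lt (Nat.one_lt_two_pow hk.ne')).ne'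
  obtain ⟨a, ha, z, rfl⟩ := exists_eq_div_add_intCast_of_mem_zmultiples_inv hm hx
  have hper := (meanSawtooth_periodic k).int_mul z (a / (2 ^ k - 1 : ℕ))
  rw [mul_one] at hper
  rw [hper, meanSawtooth_natCast_div hk ha, hV _ k a hk ha ⟨z, by simp⟩]

lemma exists_pos_dvd_two_pow_sub_one {D : ℕ} (hD : Odd D) : ∃ k, 0 < k ∧ D ∣ 2 ^ k - 1 :=
  ⟨D.totient, Nat.totient_pos.2 hD.pos, (Nat.modEq_iff_dvd' Nat.one_le_two_pow).1
    (Nat.ModEq.pow_totient hD.coprime_two_left).symm⟩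

theorem stmt_7_general {V : ℚ → ℚ} (hV : IsV2 V) {ι : Type*} [Fintype ι] [DecidableEq ι]
    [Nonempty ι] (n : ι → ℕ) (hn : ∀ j, Even (n j))
    (hcop : Pairwise (Nat.Coprime on fun j ↦ n j + 1)) {x : ℚ} (hx : Odd x.den) :
    ∑ i : (∀ j, Fin (n j)), V (x + ∑ j, ((i j : ℕ) + 1) / ((n j : ℚ) + 1)) =
      (∏ j, (n j : ℚ)) / 2 +
        ∑ S : Finset ι, (-1) ^ (Fintype.card ι - #S) * V ((∏ j ∈ S, ((n j : ℚ) + 1)) * x) := by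
  have hodd (j : ι) : Odd (n j + 1) := (hn j).add_one
  have hprod : Odd (∏ j, (n j + 1)) :=
    prod_induction _ Odd (fun _ _ ↦ Odd.mul) odd_one fun j _ ↦ hodd j
  obtain ⟨k, hk, hdvd⟩ := exists_pos_dvd_two_pow_sub_one (hx.mul hprod)
  have hm : 2 ^ k - 1 ≠ 0 := (Nat.sub_pos_of_lt (Nat.one_lt_two_pow hk.ne')).ne'
  have hxmem := mem_zmultiples_inv_of_den_dvd hm ((dvd_mul_right _ _).trans hdvd)
  have hjmem (j : ι) := natCast_inv_mem_zmultiples_inv hm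
    ((dvd_prod_of_mem (fun j ↦ n j + 1) (mem_univ j)).trans ((dvd_mul_left _ _).trans hdvd))
  have hleft (i : ∀ j, Fin (n j)) := hV.sub_half_eq_meanSawtooth hk <|
    add_mem hxmem <| sum_mem fun j (_ : j ∈ univ) ↦ nsmul_mem (hjmem j) ((i j : ℕ) + 1)
  have hright (S : Finset ι) := hV.sub_half_eq_meanSawtooth hk <|
    nsmul_mem hxmem (∏ j ∈ S, (n j + 1))
  have hsum := sum_translates_eq_sum_finset (meanSawtooth_periodic k) n hcop
    (fun j ↦ distributionRelation_meanSawtooth k (hodd j)) x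
  have hsigns : ∑ S : Finset ι, (-1 : ℚ) ^ (Fintype.card ι - #S) = 0 := by
    simpa using Fintype.sum_pow_mul_eq_add_pow ι (1 : ℚ) (-1)
  simp only [nsmul_eq_mul, Nat.cast_add, Nat.cast_one, Nat.cast_prod, ← div_eq_mul_inv]
    at hleft hright
  simp only [← hleft, ← hright, zsmul_eq_mul, Int.cast_pow, Int.cast_neg, Int.cast_one, mul_sub,
    sum_sub_distrib, ← sum_mul, hsigns, zero_mul, sub_zero] at hsum
  simp [← hsum, div_eq_mul_inv]

/-- Hasse–Davenport style identity: for `t ≥ 1` and positive integers `a₁, …, a_t` with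
`2^{a_j}+1` pairwise coprime, for every rational `x` with odd denominator,
`∑_{i₁=1}^{2^{a₁}} ⋯ ∑_{i_t=1}^{2^{a_t}} V(x + ∑_j i_j/(2^{a_j}+1))
  = 2^{a₁+⋯+a_t-1} + V(2; a₁, …, a_t; x)`. -/
theorem stmt_7 (V : ℚ → ℚ) (hV : IsV2 V) (t : ℕ) (ht : 1 ≤ t)
    (a : Fin t → ℕ) (hpos : ∀ j, 0 < a j)
    (hcop : ∀ j k, j ≠ k → Nat.Coprime (2 ^ a j + 1) (2 ^ a k + 1))
    (x : ℚ) (hx : Odd x.den) :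
    ∑ i : (∀ j : Fin t, Fin (2 ^ a j)),
        V (x + ∑ j, (((i j : ℕ) : ℚ) + 1) / ((2 : ℚ) ^ a j + 1)) =
      (2 : ℚ) ^ ((∑ j, a j) - 1) + Vmulti V a x := by
  have : Nonempty (Fin t) := Fin.pos_iff_nonempty.1 ht
  have hsum : 1 ≤ ∑ j, a j := sum_pos (fun j _ ↦ hpos j) univ_nonempty
  simpa [Vmulti, prod_pow_eq_pow_sum, pow_sub₀ (2 : ℚ) two_ne_zero hsum, div_eq_mul_inv] using
    stmt_7_general hV (fun j ↦ 2 ^ a j) (fun j ↦ even_two.pow_of_ne_zero (hpos j).ne')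
      (fun j k ↦ hcop j k) hx
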